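/- arXiv:0805.2140 — 3 statements merged into one kernel-verified Lean document; each statement's English description precedes it below -/
import Mathlib

section
/- Let k be an algebraically closed field and n ≥ 1. Let f, g be polynomials over k in the n² matrix entry variables, and assume both are invariant under conjugation: for every P ∈ GLₙ(k) and every M ∈ Mₙ(k), f(P M P⁻¹) = f(M) and g(P M P⁻¹) = g(M). Let res(f), res(g) ∈ k[X₁, …, Xₙ] denote the restrictions to diagonal matrices, obtained by substituting Xᵢⱼ ↦ 0 for i ≠ j and Xᵢᵢ ↦ Xᵢ. If res(f) divides res(g) in k[X₁, …, Xₙ], then f divides g in the polynomial ring in the matrix entries. -/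
open Matrix MvPolynomial

/-!
A conjugation-invariant polynomial `f` over an infinite field satisfies the polynomial identity
`f(P M adj P) = f(det P • M)`, so it stays invariant over every commutative algebra. Over an
algebraic closure of the field of rational functions in its entries, the generic matrix is
conjugate to a diagonal matrix with distinct entries `d`, so `f`, being its own value at the
generic matrix, equals `res(f)(d)`. As `res(f)` is symmetric, `res(f)(d)` is a polynomial in the
coefficients of the generic characteristic polynomial. This recovers `f` from `res(f)` by a ring
homomorphism defined on all symmetric polynomials (Chevalley restriction for `GLₙ`), and a quotient
of symmetric polynomials may be taken symmetric, so divisibility of restrictions lifts.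
-/

section Evaluation

variable {R A B n : Type*} [CommRing R] [CommRing A] [Algebra R A] [CommRing B] [Algebra R B]

/-- The value at the matrix `M` of a polynomial in the matrix entries, where the variable `(i, j)`
stands for the entry `M i j`. -/
noncomputable def evalMatrix (M : Matrix n n A) : MvPolynomial (n × n) R →ₐ[R] A :=
  aeval fun p : n × n => M p.1 p.2

lemma map_evalMatrix (φ : A →ₐ[R] B) (M : Matrix n n A) (f : MvPolynomial (n × n) R) :
    φ (evalMatrix M f) = evalMatrix (M.map φ) f :=
  comp_aeval_apply (fun p : n × n => M p.1 p.2) φ f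

lemma evalMatrix_mvPolynomialX (f : MvPolynomial (n × n) R) :
    evalMatrix (mvPolynomialX n n R) f = f :=
  aeval_X_left_apply f

lemma evalMatrix_map_algebraMap_mvPolynomialX [Algebra (MvPolynomial (n × n) R) A]
    [IsScalarTower R (MvPolynomial (n × n) R) A] (f : MvPolynomial (n × n) R) :
    evalMatrix ((mvPolynomialX n n R).map (algebraMap (MvPolynomial (n × n) R) A)) f =
      algebraMap (MvPolynomial (n × n) R) A f := by
  rw [← IsScalarTower.coe_toAlgHom' R, ← map_evalMatrix, evalMatrix_mvPolynomialX]

variable [DecidableEq n]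

/-- The restriction to diagonal matrices of a polynomial in the matrix entries. -/
noncomputable def diagRestrict : MvPolynomial (n × n) R →ₐ[R] MvPolynomial n R :=
  aeval fun p : n × n => if p.1 = p.2 then X p.1 else 0

lemma evalMatrix_diagonal (d : n → A) (f : MvPolynomial (n × n) R) :
    evalMatrix (diagonal d) f = aeval d (diagRestrict f) := by
  have entry (p : n × n) :
      diagonal d p.1 p.2 = aeval d (if p.1 = p.2 then X p.1 else 0 : MvPolynomial n R) := by
    split_ifs with h <;> simp [h]
  simp only [evalMatrix, diagRestrict, comp_aeval_apply, entry]

end Evaluation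

section Invariance

variable {n : Type*} [Fintype n] [DecidableEq n]

/-- Invariance under conjugation by invertible matrices with entries in the base ring, for a
polynomial in the matrix entries regarded as a function on matrices. -/
def IsConjInvariant {R : Type*} [CommRing R] (f : MvPolynomial (n × n) R) : Prop :=
  ∀ (P : GeneralLinearGroup n R) (M : Matrix n n R),
    eval (fun p : n × n =>
        ((P : Matrix n n R) * M * ((P⁻¹ : GeneralLinearGroup n R) : Matrix n n R)) p.1 p.2) f =
      eval (fun p : n × n => M p.1 p.2) f

lemma mvPolynomial_eq_of_eval_eq_of_eval_ne_zero {R σ : Type*} [CommRing R] [IsDomain R]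
    [Infinite R] {p q r : MvPolynomial σ R} (hr : r ≠ 0)
    (h : ∀ x, eval x r ≠ 0 → eval x p = eval x q) : p = q := by
  refine mul_right_cancel₀ hr (MvPolynomial.funext fun x => ?_)
  by_cases hx : eval x r = 0
  · rw [map_mul, map_mul, hx, mul_zero, mul_zero]
  · rw [map_mul, map_mul, h x hx]

lemma mul_det_smul_mul_inv {R : Type*} [CommRing R] (P : GeneralLinearGroup n R)
    (M : Matrix n n R) :
    (P : Matrix n n R) * ((P : Matrix n n R).det • M) *
        ((P⁻¹ : GeneralLinearGroup n R) : Matrix n n R) =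
      (P : Matrix n n R) * M * (P : Matrix n n R).adjugate := by
  have det_smul_inv : (P : Matrix n n R).det • ((P⁻¹ : GeneralLinearGroup n R) : Matrix n n R) =
      (P : Matrix n n R).adjugate := by
    rw [← mul_one (adjugate _), ← P.mul_inv, ← mul_assoc, adjugate_mul, smul_mul, one_mul]
  rw [mul_smul_comm, smul_mul_assoc, ← mul_smul_comm, det_smul_inv]

lemma exists_conj_diagonal_eq_diagonal_comp {R : Type*} [CommRing R] (e : Equiv.Perm n)
    (d : n → R) :
    ∃ P : GeneralLinearGroup n R, (P : Matrix n n R) * diagonal d *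
      ((P⁻¹ : GeneralLinearGroup n R) : Matrix n n R) = diagonal (d ∘ e) := by
  refine ⟨⟨e.permMatrix R, e⁻¹.permMatrix R, ?_, ?_⟩, ?_⟩
  · rw [← permMatrix_mul, inv_mul_cancel, permMatrix_one]
  · rw [← permMatrix_mul, mul_inv_cancel, permMatrix_one]
  · rw [Units.inv_mk, PEquiv.toMatrix_toPEquiv_mul, PEquiv.mul_toMatrix_toPEquiv,
      submatrix_submatrix]
    exact submatrix_diagonal_equiv d e

section Map

variable {R A B : Type*} [CommRing R] [CommRing A] [Algebra R A] [CommRing B] [Algebra R B]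

lemma map_evalMatrix_mul_mul_adjugate (φ : A →ₐ[R] B) (P M : Matrix n n A)
    (f : MvPolynomial (n × n) R) :
    φ (evalMatrix (P * M * P.adjugate) f) =
      evalMatrix (P.map φ * M.map φ * (P.map φ).adjugate) f := by
  simp only [map_evalMatrix, ← AlgHom.mapMatrix_apply, map_mul, AlgHom.map_adjugate]

lemma map_evalMatrix_det_smul (φ : A →ₐ[R] B) (P M : Matrix n n A) (f : MvPolynomial (n × n) R) :
    φ (evalMatrix (P.det • M) f) = evalMatrix ((P.map φ).det • M.map φ) f := by
  rw [map_evalMatrix, Matrix.map_smul' _ _ _ (map_mul φ), AlgHom.map_det, AlgHom.mapMatrix_apply]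

end Map

variable {k : Type*} [Field k] {f : MvPolynomial (n × n) k}

namespace IsConjInvariant

lemma evalMatrix_mul_mul_adjugate_of_det_ne_zero (hf : IsConjInvariant f) {P : Matrix n n k}
    (hP : P.det ≠ 0) (M : Matrix n n k) :
    evalMatrix (P * M * P.adjugate) f = evalMatrix (P.det • M) f := by
  have conj_eq := mul_det_smul_mul_inv (GeneralLinearGroup.mkOfDetNeZero P hP) M
  exact conj_eq ▸ hf (GeneralLinearGroup.mkOfDetNeZero P hP) (P.det • M)

variable [Infinite k] {A : Type*} [CommRing A] [Algebra k A]

lemma evalMatrix_mul_mul_adjugate (hf : IsConjInvariant f) (P M : Matrix n n A) :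
    evalMatrix (P * M * P.adjugate) f = evalMatrix (P.det • M) f := by
  let genericP := (rename (R := k) (Sum.inl : n × n → n × n ⊕ n × n)).mapMatrix
    (mvPolynomialX n n k)
  let genericM := (rename (R := k) (Sum.inr : n × n → n × n ⊕ n × n)).mapMatrix
    (mvPolynomialX n n k)
  have det_ne_zero : genericP.det ≠ 0 := by
    rw [← AlgHom.map_det, map_ne_zero_iff _ (rename_injective _ Sum.inl_injective)]
    exact det_mvPolynomialX_ne_zero n k
  have generic_identity : evalMatrix (genericP * genericM * genericP.adjugate) f =
      evalMatrix (genericP.det • genericM) f := by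
    refine mvPolynomial_eq_of_eval_eq_of_eval_ne_zero det_ne_zero fun x hx => ?_
    rw [← aeval_eq_eval, AlgHom.map_det] at hx
    rw [← aeval_eq_eval, map_evalMatrix_mul_mul_adjugate, map_evalMatrix_det_smul]
    exact hf.evalMatrix_mul_mul_adjugate_of_det_ne_zero hx _
  let specialization : MvPolynomial (n × n ⊕ n × n) k →ₐ[k] A :=
    aeval (Sum.elim (fun p => P p.1 p.2) fun p => M p.1 p.2)
  have map_genericP : genericP.map specialization = P := by
    ext i j; simp [genericP, specialization]
  have map_genericM : genericM.map specialization = M := by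
    ext i j; simp [genericM, specialization]
  simpa only [map_evalMatrix_mul_mul_adjugate, map_evalMatrix_det_smul, map_genericP,
    map_genericM] using congrArg specialization generic_identity

lemma evalMatrix_conj (hf : IsConjInvariant f) (P : GeneralLinearGroup n A) (M : Matrix n n A) :
    evalMatrix ((P : Matrix n n A) * M * ((P⁻¹ : GeneralLinearGroup n A) : Matrix n n A)) f =
      evalMatrix M f := by
  obtain ⟨N, rfl⟩ : ∃ N : Matrix n n A, (P : Matrix n n A).det • N = M :=
    ⟨((P⁻¹ : GeneralLinearGroup n A) : Matrix n n A).det • M, by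
      rw [smul_smul, ← det_mul, P.mul_inv, det_one, one_smul]⟩
  rw [mul_det_smul_mul_inv, hf.evalMatrix_mul_mul_adjugate]

lemma isSymmetric_diagRestrict (hf : IsConjInvariant f) : (diagRestrict f).IsSymmetric := by
  intro e
  obtain ⟨P, conj_diagonal⟩ := exists_conj_diagonal_eq_diagonal_comp e (X : n → MvPolynomial n k)
  calc rename e (diagRestrict f)
      = evalMatrix (diagonal (X ∘ e)) f := by rw [evalMatrix_diagonal, rename_eq_aeval]
    _ = evalMatrix (diagonal X) f := by rw [← conj_diagonal, hf.evalMatrix_conj]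
    _ = diagRestrict f := by rw [evalMatrix_diagonal, aeval_X_left_apply]

end IsConjInvariant

end Invariance

section SymmetricFunctions

variable {R A n : Type*} [CommRing R] [CommRing A] [Algebra R A] [Fintype n]

lemma coeff_prod_X_sub_C_eq_aeval_esymm (d : n → A) {j : ℕ} (hj : j ≤ Fintype.card n) :
    (∏ i, (Polynomial.X - Polynomial.C (d i))).coeff (Fintype.card n - j) =
      (-1) ^ j * aeval d (esymm n R j) := by
  have vieta := Multiset.prod_X_sub_C_coeff (Finset.univ.val.map d)
    (k := Fintype.card n - j) (by simp)
  rw [Multiset.card_map, Finset.card_val, Finset.card_univ, Nat.sub_sub_self hj,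
    Multiset.map_map] at vieta
  rw [aeval_esymm_eq_multiset_esymm]
  exact vieta

variable [DecidableEq n]

lemma evalMatrix_coeff_charpoly_univ (M : Matrix n n A) (j : ℕ) :
    evalMatrix M ((charpoly.univ R n).coeff j) = M.charpoly.coeff j :=
  charpoly.univ_coeff_eval₂Hom n (algebraMap R A) (fun p => M p.1 p.2) j

variable (R n) in
/-- The `j`-th elementary symmetric polynomial of the eigenvalues, as a polynomial in the matrix
entries: up to sign, a coefficient of the generic characteristic polynomial. It has this meaning
only for `j ≤ card n`, because of the truncated subtraction. -/
noncomputable def matrixEsymm (j : ℕ) : MvPolynomial (n × n) R :=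
  (-1) ^ j * (charpoly.univ R n).coeff (Fintype.card n - j)

lemma evalMatrix_matrixEsymm {M : Matrix n n A} {d : n → A}
    (hM : M.charpoly = ∏ i, (Polynomial.X - Polynomial.C (d i))) {j : ℕ}
    (hj : j ≤ Fintype.card n) :
    evalMatrix M (matrixEsymm R n j) = aeval d (esymm n R j) := by
  rw [matrixEsymm, map_mul, evalMatrix_coeff_charpoly_univ, hM,
    coeff_prod_X_sub_C_eq_aeval_esymm (R := R) d hj, ← mul_assoc, map_pow, map_neg, map_one,
    ← mul_pow, neg_one_mul, neg_neg, one_pow, one_mul]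

variable (R n) in
/-- The algebra homomorphism sending a symmetric polynomial `h` to the polynomial in the matrix
entries whose value at a matrix is `h` of the eigenvalues. It is determined by
`esymm n R j ↦ matrixEsymm R n j`. -/
noncomputable def symmetricLift : symmetricSubalgebra n R →ₐ[R] MvPolynomial (n × n) R :=
  (aeval fun i : Fin (Fintype.card n) => matrixEsymm R n (i + 1)).comp
    (esymmAlgEquiv n R rfl).symm.toAlgHom

lemma evalMatrix_symmetricLift {M : Matrix n n A} {d : n → A}
    (hM : M.charpoly = ∏ i, (Polynomial.X - Polynomial.C (d i))) (h : symmetricSubalgebra n R) :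
    evalMatrix M (symmetricLift R n h) = aeval d (h : MvPolynomial n R) := by
  obtain ⟨H, rfl⟩ := (esymmAlgEquiv n R rfl).surjective h
  have symmetricLift_apply : symmetricLift R n (esymmAlgEquiv n R rfl H) =
      aeval (fun i : Fin (Fintype.card n) => matrixEsymm R n (i + 1)) H := by
    rw [symmetricLift, AlgHom.comp_apply, AlgEquiv.coe_toAlgHom, AlgEquiv.symm_apply_apply]
  have coe_esymmAlgEquiv : (esymmAlgEquiv n R rfl H : MvPolynomial n R) =
      aeval (fun i : Fin (Fintype.card n) => esymm n R (i + 1)) H :=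
    esymmAlgHom_apply H
  have eval_matrixEsymm (i : Fin (Fintype.card n)) :
      evalMatrix M (matrixEsymm R n (i + 1)) = aeval d (esymm n R (i + 1)) :=
    evalMatrix_matrixEsymm hM i.isLt
  simp only [symmetricLift_apply, coe_esymmAlgEquiv, comp_aeval_apply, eval_matrixEsymm]

lemma diagRestrict_symmetricLift (h : symmetricSubalgebra n R) :
    diagRestrict (symmetricLift R n h) = h := by
  rw [← aeval_X_left_apply (diagRestrict _), ← evalMatrix_diagonal,
    evalMatrix_symmetricLift (charpoly_diagonal X), aeval_X_left_apply]

lemma symmetricLift_injective : Function.Injective (symmetricLift R n) := fun p q hpq =>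
  Subtype.ext <| by rw [← diagRestrict_symmetricLift p, hpq, diagRestrict_symmetricLift]

end SymmetricFunctions

lemma symmetricSubalgebra_dvd_of_coe_dvd_coe {R σ : Type*} [CommRing R] [IsDomain R]
    {p q : symmetricSubalgebra σ R} (hpq : (p : MvPolynomial σ R) ∣ q) : p ∣ q := by
  obtain ⟨h, hh⟩ := hpq
  rcases eq_or_ne (p : MvPolynomial σ R) 0 with hp | hp
  · have hq : q = 0 := Subtype.ext (by rw [hh, hp, zero_mul, ZeroMemClass.coe_zero])
    exact hq ▸ dvd_zero p
  · have isSymmetric_h : h.IsSymmetric := fun e => mul_left_cancel₀ hp <| by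
      calc p.1 * rename e h = rename e (p.1 * h) := by rw [map_mul, p.2 e]
        _ = p.1 * h := by rw [← hh, q.2 e]
    exact ⟨⟨h, isSymmetric_h⟩, Subtype.ext hh⟩

section ProdDiff

variable (R n : Type*) [CommRing R] [Fintype n]

/-- The product of all differences of distinct variables: up to sign, the discriminant of
`∏ i, (T - X i)`. -/
noncomputable def prodDiff : MvPolynomial n R :=
  ∏ p ∈ Finset.univ.offDiag, (X p.1 - X p.2)

lemma isSymmetric_prodDiff : (prodDiff R n).IsSymmetric := by
  intro e
  simp only [prodDiff, map_prod, map_sub, rename_X]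
  exact Finset.prod_equiv (e.prodCongr e) (by simp) (by simp)

variable {R n}

lemma prodDiff_ne_zero [IsDomain R] : prodDiff R n ≠ 0 :=
  Finset.prod_ne_zero_iff.2 fun _ hp =>
    sub_ne_zero.2 <| X_injective.ne (Finset.mem_offDiag.1 hp).2.2

lemma injective_of_aeval_prodDiff_ne_zero {A : Type*} [CommRing A] [Algebra R A] {d : n → A}
    (hd : aeval d (prodDiff R n) ≠ 0) : Function.Injective d := by
  intro i j hij
  by_contra hne
  refine hd ?_
  rw [prodDiff, map_prod]
  exact Finset.prod_eq_zero (i := (i, j)) (by simpa using hne) (by simp [hij])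

end ProdDiff

section Diagonalization

variable {L n : Type*} [Field L] [Fintype n] [DecidableEq n]

lemma exists_charpoly_eq_prod_X_sub_C {M : Matrix n n L} (hM : M.charpoly.Splits) :
    ∃ d : n → L, M.charpoly = ∏ i, (Polynomial.X - Polynomial.C (d i)) := by
  classical
  have card_roots : Fintype.card n = Fintype.card M.charpoly.roots := by
    rw [Multiset.card_coe, ← hM.natDegree_eq_card_roots, charpoly_natDegree_eq_dim]
  let e := Fintype.equivOfCardEq card_roots
  refine ⟨fun i => (e i).1, ?_⟩
  calc M.charpoly
      = (M.charpoly.roots.map fun x => Polynomial.X - Polynomial.C x).prod :=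
        hM.eq_prod_roots_of_monic M.charpoly_monic
    _ = ∏ x : M.charpoly.roots, (Polynomial.X - Polynomial.C x.1) :=
        congrArg Multiset.prod (Multiset.map_univ_comp_coe _ _).symm
    _ = ∏ i, (Polynomial.X - Polynomial.C (e i).1) := (e.prod_comp _).symm

lemma exists_eq_conj_diagonal {M : Matrix n n L} {d : n → L}
    (hM : M.charpoly = ∏ i, (Polynomial.X - Polynomial.C (d i))) (hd : Function.Injective d) :
    ∃ P : GeneralLinearGroup n L, M = (P : Matrix n n L) * diagonal d *
      ((P⁻¹ : GeneralLinearGroup n L) : Matrix n n L) := by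
  have hasEigenvalue (i : n) : Module.End.HasEigenvalue (toLin' M) (d i) := by
    rw [Module.End.hasEigenvalue_iff_isRoot_charpoly, charpoly_toLin', hM,
      Polynomial.isRoot_prod]
    exact ⟨i, Finset.mem_univ i, Polynomial.root_X_sub_C.2 rfl⟩
  choose v hv using fun i => (hasEigenvalue i).exists_hasEigenvector
  have linearIndependent_v : LinearIndependent L v :=
    Module.End.eigenvectors_linearIndependent' (toLin' M) d hd v hv
  obtain ⟨P, hP⟩ : IsUnit (of v)ᵀ :=
    linearIndependent_cols_iff_isUnit.1 linearIndependent_v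
  have mul_P : M * (P : Matrix n n L) = P * diagonal d := by
    ext i j
    rw [hP, mul_diagonal, mul_comm]
    exact congrFun (hv j).apply_eq_smul i
  refine ⟨P, ?_⟩
  rw [← mul_P, mul_assoc, P.mul_inv, mul_one]

variable {R : Type*} [CommRing R] [IsDomain R] [Algebra R L] [Algebra (MvPolynomial (n × n) R) L]
  [IsScalarTower R (MvPolynomial (n × n) R) L] [FaithfulSMul (MvPolynomial (n × n) R) L]

lemma injective_of_charpoly_map_mvPolynomialX_eq_prod {d : n → L}
    (hd : ((mvPolynomialX n n R).map (algebraMap (MvPolynomial (n × n) R) L)).charpoly =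
      ∏ i, (Polynomial.X - Polynomial.C (d i))) :
    Function.Injective d := by
  let D : symmetricSubalgebra n R := ⟨prodDiff R n, isSymmetric_prodDiff R n⟩
  have D_ne_zero : D ≠ 0 := fun hD => prodDiff_ne_zero (congrArg Subtype.val hD)
  have lift_ne_zero : symmetricLift R n D ≠ 0 :=
    (map_ne_zero_iff _ symmetricLift_injective).2 D_ne_zero
  refine injective_of_aeval_prodDiff_ne_zero (R := R) ?_
  rw [← evalMatrix_symmetricLift hd D, evalMatrix_map_algebraMap_mvPolynomialX]
  exact (map_ne_zero_iff _ (FaithfulSMul.algebraMap_injective _ L)).2 lift_ne_zero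

end Diagonalization

theorem IsConjInvariant.symmetricLift_diagRestrict {k n : Type*} [Field k] [Infinite k] [Fintype n]
    [DecidableEq n] {f : MvPolynomial (n × n) k} (hf : IsConjInvariant f) :
    symmetricLift k n ⟨diagRestrict f, hf.isSymmetric_diagRestrict⟩ = f := by
  let L := AlgebraicClosure (FractionRing (MvPolynomial (n × n) k))
  have : FaithfulSMul (MvPolynomial (n × n) k) L :=
    .trans _ (FractionRing (MvPolynomial (n × n) k)) _
  let M := (mvPolynomialX n n k).map (algebraMap (MvPolynomial (n × n) k) L)
  obtain ⟨d, hd⟩ := exists_charpoly_eq_prod_X_sub_C (IsAlgClosed.splits M.charpoly)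
  obtain ⟨P, hP⟩ := exists_eq_conj_diagonal hd (injective_of_charpoly_map_mvPolynomialX_eq_prod hd)
  refine FaithfulSMul.algebraMap_injective (MvPolynomial (n × n) k) L ?_
  calc algebraMap (MvPolynomial (n × n) k) L (symmetricLift k n ⟨diagRestrict f, _⟩)
      = evalMatrix M (symmetricLift k n ⟨diagRestrict f, _⟩) :=
        (evalMatrix_map_algebraMap_mvPolynomialX _).symm
    _ = aeval d (diagRestrict f) := evalMatrix_symmetricLift hd _
    _ = evalMatrix (diagonal d) f := (evalMatrix_diagonal d f).symm
    _ = evalMatrix M f := by rw [hP, hf.evalMatrix_conj]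
    _ = algebraMap (MvPolynomial (n × n) k) L f := evalMatrix_map_algebraMap_mvPolynomialX f

theorem statement16_general {k n : Type*} [Field k] [Infinite k] [Fintype n] [DecidableEq n]
    {f g : MvPolynomial (n × n) k} (hf : IsConjInvariant f) (hg : IsConjInvariant g)
    (hres : diagRestrict f ∣ diagRestrict g) : f ∣ g := by
  rw [← hf.symmetricLift_diagRestrict, ← hg.symmetricLift_diagRestrict]
  exact map_dvd (symmetricLift k n) (symmetricSubalgebra_dvd_of_coe_dvd_coe hres)

/-- Let `k` be an algebraically closed field, `n ≥ 1`, and let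
`f, g` be polynomials over `k` in the `n²` matrix entry variables, both invariant under
conjugation: `f(P M P⁻¹) = f(M)` and `g(P M P⁻¹) = g(M)` for all `P ∈ GLₙ(k)` and all
`M ∈ Mₙ(k)`.  If the restriction of `f` to diagonal matrices (substituting `Xᵢⱼ ↦ 0`
for `i ≠ j` and `Xᵢᵢ ↦ Xᵢ`) divides that of `g` in `k[X₁, …, Xₙ]`, then `f` divides `g`. -/
theorem statement16 {k : Type*} [Field k] [IsAlgClosed k] (n : ℕ) (hn : 1 ≤ n)
    (f g : MvPolynomial (Fin n × Fin n) k)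
    (hf : ∀ (P : Matrix.GeneralLinearGroup (Fin n) k) (M : Matrix (Fin n) (Fin n) k),
      eval (fun p : Fin n × Fin n =>
          ((P : Matrix (Fin n) (Fin n) k) * M *
            ((P⁻¹ : Matrix.GeneralLinearGroup (Fin n) k) : Matrix (Fin n) (Fin n) k)) p.1 p.2) f =
        eval (fun p : Fin n × Fin n => M p.1 p.2) f)
    (hg : ∀ (P : Matrix.GeneralLinearGroup (Fin n) k) (M : Matrix (Fin n) (Fin n) k),
      eval (fun p : Fin n × Fin n =>
          ((P : Matrix (Fin n) (Fin n) k) * M *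
            ((P⁻¹ : Matrix.GeneralLinearGroup (Fin n) k) : Matrix (Fin n) (Fin n) k)) p.1 p.2) g =
        eval (fun p : Fin n × Fin n => M p.1 p.2) g)
    (hres : (aeval (fun p : Fin n × Fin n =>
          if p.1 = p.2 then (X p.1 : MvPolynomial (Fin n) k) else 0) f) ∣
        aeval (fun p : Fin n × Fin n =>
          if p.1 = p.2 then (X p.1 : MvPolynomial (Fin n) k) else 0) g) :
    f ∣ g := by
  have : Infinite k := IsAlgClosed.instInfinite
  exact statement16_general hf hg hres
end

section
/- Let n ≥ 3 and let sl_n(ℤ) be the Lie ring of n×n integer matrices with trace zero, with bracket [X, Y] = XY − YX. Then sl_n(ℤ) equals its own derived algebra: every trace-zero integer matrix is a ℤ-linear combination of brackets [X, Y] with X, Y ∈ sl_n(ℤ). -/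
open Matrix

/-- `sl_n(ℤ)`: the additive group of `n × n` integer matrices of trace zero. -/
def slZ (n : ℕ) : AddSubgroup (Matrix (Fin n) (Fin n) ℤ) where
  carrier := {M | M.trace = 0}
  add_mem' := by
    intro a b ha hb
    simp only [Set.mem_setOf_eq] at *
    rw [Matrix.trace_add, ha, hb, add_zero]
  zero_mem' := by simp
  neg_mem' := by
    intro a ha
    simp only [Set.mem_setOf_eq] at *
    rw [Matrix.trace_neg, ha, neg_zero]

/-!
Write `E i j a` for the matrix whose only nonzero entry is `a`, at position `(i, j)`. The matrices
`E i j a` with `i ≠ j` and the differences `E i i a - E j j a` generate the trace-zero matrices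
additively, and each of them is a single bracket of off-diagonal matrices:
`E i j a = [E i k a, E k j 1]` for a third index `k`, and
`E i i a - E j j a = [E i j a, E j i 1]`.
-/

section DerivedAddSubgroup

variable {A : Type*} [NonUnitalRing A]

/-- The additive subgroup generated by the commutators `x * y - y * x` of elements of `L`. When `L`
is a Lie subring of `A`, this is its derived algebra `[L, L]`. -/
def derivedAddSubgroup (L : AddSubgroup A) : AddSubgroup A :=
  AddSubgroup.closure {m | ∃ x ∈ L, ∃ y ∈ L, m = x * y - y * x}

theorem commutator_mem_derivedAddSubgroup {L : AddSubgroup A} {x y : A} (hx : x ∈ L) (hy : y ∈ L) :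
    x * y - y * x ∈ derivedAddSubgroup L :=
  AddSubgroup.subset_closure ⟨x, hx, y, hy, rfl⟩

end DerivedAddSubgroup

section Generators

variable {ι R : Type*} [Fintype ι] [DecidableEq ι] [AddCommGroup R] {S : AddSubgroup (Matrix ι ι R)}

theorem single_mem_ker_trace {i j : ι} (hij : i ≠ j) (a : R) :
    single i j a ∈ (traceAddMonoidHom ι R).ker :=
  trace_single_eq_of_ne i j a hij

theorem sub_single_trace_mem (offDiag : ∀ i j a, i ≠ j → single i j a ∈ S)
    (diagDiff : ∀ i j a, single i i a - single j j a ∈ S) (k : ι) (M : Matrix ι ι R) :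
    M - single k k M.trace ∈ S := by
  induction M using Matrix.induction_on' with
  | h_zero => simp
  | h_add M N hM hN =>
    rw [trace_add, single_add, add_sub_add_comm]
    exact add_mem hM hN
  | h_std_basis i j a =>
    rcases eq_or_ne i j with rfl | hij
    · rw [trace_single_eq_same]
      exact diagDiff i k a
    · rw [trace_single_eq_of_ne i j a hij, single_zero, sub_zero]
      exact offDiag i j a hij

theorem ker_trace_le_of_single_mem (offDiag : ∀ i j a, i ≠ j → single i j a ∈ S)
    (diagDiff : ∀ i j a, single i i a - single j j a ∈ S) :
    (traceAddMonoidHom ι R).ker ≤ S := by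
  intro M (hM : M.trace = 0)
  rcases isEmpty_or_nonempty ι with _ | ⟨⟨k⟩⟩
  · rw [Subsingleton.elim M 0]
    exact zero_mem S
  · simpa [hM] using sub_single_trace_mem offDiag diagDiff k M

end Generators

section ElementaryMatrices

variable {ι R : Type*} [Fintype ι] [DecidableEq ι] [Ring R] {i j k : ι}

theorem single_mem_derivedAddSubgroup (hij : i ≠ j) (hki : k ≠ i) (hkj : k ≠ j) (a : R) :
    single i j a ∈ derivedAddSubgroup (traceAddMonoidHom ι R).ker := by
  have bracket : single i k a * single k j 1 - single k j 1 * single i k a = single i j a := by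
    simp [hij.symm]
  rw [← bracket]
  exact commutator_mem_derivedAddSubgroup (single_mem_ker_trace hki.symm a)
    (single_mem_ker_trace hkj 1)

theorem single_sub_single_mem_derivedAddSubgroup (i j : ι) (a : R) :
    single i i a - single j j a ∈ derivedAddSubgroup (traceAddMonoidHom ι R).ker := by
  rcases eq_or_ne i j with rfl | hij
  · rw [sub_self]
    exact zero_mem _
  have bracket : single i j a * single j i 1 - single j i 1 * single i j a =
      single i i a - single j j a := by
    simp
  rw [← bracket]
  exact commutator_mem_derivedAddSubgroup (single_mem_ker_trace hij a)
    (single_mem_ker_trace hij.symm 1)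

end ElementaryMatrices

section TraceZero

variable {ι R : Type*} [Fintype ι]

theorem ker_trace_le_derivedAddSubgroup [Ring R] (hι : 3 ≤ Fintype.card ι) :
    (traceAddMonoidHom ι R).ker ≤ derivedAddSubgroup (traceAddMonoidHom ι R).ker := by
  classical
  refine ker_trace_le_of_single_mem (fun i j a hij ↦ ?_) single_sub_single_mem_derivedAddSubgroup
  have three_le : 3 ≤ ENat.card ι := by
    rw [ENat.card_eq_coe_fintype_card]
    exact_mod_cast hι
  obtain ⟨k, hki, hkj⟩ := ENat.exists_ne_ne_of_three_le three_le i j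
  exact single_mem_derivedAddSubgroup hij hki hkj a

theorem derivedAddSubgroup_le_ker_trace [NonUnitalCommRing R] (L : AddSubgroup (Matrix ι ι R)) :
    derivedAddSubgroup L ≤ (traceAddMonoidHom ι R).ker := by
  refine (AddSubgroup.closure_le _).2 ?_
  rintro _ ⟨X, -, Y, -, rfl⟩
  change (X * Y - Y * X).trace = 0
  rw [trace_sub, trace_mul_comm, sub_self]

theorem statement17_general [CommRing R] (hι : 3 ≤ Fintype.card ι) :
    derivedAddSubgroup (traceAddMonoidHom ι R).ker = (traceAddMonoidHom ι R).ker :=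
  (derivedAddSubgroup_le_ker_trace _).antisymm (ker_trace_le_derivedAddSubgroup hι)

end TraceZero

theorem slZ_eq_ker_trace (n : ℕ) : slZ n = (traceAddMonoidHom (Fin n) ℤ).ker :=
  rfl

/-- For `n ≥ 3`, the Lie ring `sl_n(ℤ)` of trace-zero integer matrices
equals its own derived algebra: the additive subgroup generated by all brackets
`[X, Y] = XY − YX` with `X, Y ∈ sl_n(ℤ)` is all of `sl_n(ℤ)`. -/
theorem statement17 (n : ℕ) (hn : 3 ≤ n) :
    AddSubgroup.closure {m | ∃ X ∈ slZ n, ∃ Y ∈ slZ n, m = X * Y - Y * X} = slZ n := by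
  rw [slZ_eq_ker_trace]
  exact statement17_general (hn.trans_eq (Fintype.card_fin n).symm)
end

section
/- Let A be a commutative ring with total quotient ring K (the localization of A at the nonzerodivisors), set K/A = coker(A → K), and let F be a torsion A-module with few relations, i.e. F ⊗_A K = 0 and F is the cokernel of an A-linear map Aⁿ → Aⁿ. Then its Pontryagin dual F† = Hom_A(F, K/A) is also a torsion A-module with few relations: F† ⊗_A K = 0 and F† is the cokernel of an A-linear map Aⁿ → Aⁿ. -/
/-- The total quotient ring of a commutative ring `A`: the localization of `A` at the
multiplicative set of nonzerodivisors. -/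
abbrev TotalQuotientRing (A : Type*) [CommRing A] : Type _ :=
  Localization (nonZeroDivisors A)

/-- The `A`-module `K/A`, the quotient of the total quotient ring `K` by the image of
the canonical map `A → K`. -/
abbrev KModA (A : Type*) [CommRing A] : Type _ :=
  TotalQuotientRing A ⧸ LinearMap.range (Algebra.linearMap A (TotalQuotientRing A))

/-!
For `φ : P → P` with `P` finite projective, put `F = coker φ`. Since `F ⊗ K = 0`, the base change
of `φ` to `K` is surjective, hence bijective (`P` is finite), so composition with `φ` is bijective
on `Hom(P, K)`. Composition with `φ` is an endomorphism `φ*` of the short exact sequence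
`0 → Hom(P, A) → Hom(P, K) → Hom(P, K/A) → 0` which is bijective in the middle, so the snake lemma
identifies `F† = ker (φ* on Hom(P, K/A))` with `coker (φ* on Hom(P, A))`, the cokernel of the
transpose of `φ`. Finally `F† ⊗ K = 0` because the annihilator of the finite module `F` generates
the unit ideal of `K` and also kills `F†`.
-/

open Function TensorProduct

section Snake

variable {R X₁ X₂ X₃ Y₁ Y₂ Y₃ : Type*} [Ring R]
  [AddCommGroup X₁] [AddCommGroup X₂] [AddCommGroup X₃]
  [AddCommGroup Y₁] [AddCommGroup Y₂] [AddCommGroup Y₃]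
  [Module R X₁] [Module R X₂] [Module R X₃] [Module R Y₁] [Module R Y₂] [Module R Y₃]
  {f₁ : X₁ →ₗ[R] X₂} {f₂ : X₂ →ₗ[R] X₃} {g₁ : Y₁ →ₗ[R] Y₂} {g₂ : Y₂ →ₗ[R] Y₃}
  {α : X₁ →ₗ[R] Y₁} {β : X₂ ≃ₗ[R] Y₂} {γ : X₃ →ₗ[R] Y₃}

theorem ker_comp_symm_comp_eq_range (hf : Exact f₁ f₂) (hg₁ : Injective g₁)
    (hαβ : β.toLinearMap ∘ₗ f₁ = g₁ ∘ₗ α) :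
    LinearMap.ker (f₂ ∘ₗ β.symm.toLinearMap ∘ₗ g₁) = LinearMap.range α := by
  ext y
  have hαβ' (x : X₁) : β (f₁ x) = g₁ (α x) := LinearMap.congr_fun hαβ x
  calc f₂ (β.symm (g₁ y)) = 0 ↔ ∃ x, f₁ x = β.symm (g₁ y) := hf _
    _ ↔ ∃ x, α x = y := by simp_rw [LinearEquiv.eq_symm_apply, hαβ', hg₁.eq_iff]

theorem range_comp_symm_comp_eq_ker (hf₂ : Surjective f₂) (hg : Exact g₁ g₂)
    (hβγ : γ ∘ₗ f₂ = g₂ ∘ₗ β.toLinearMap) :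
    LinearMap.range (f₂ ∘ₗ β.symm.toLinearMap ∘ₗ g₁) = LinearMap.ker γ := by
  have hβγ' (x : X₂) : γ (f₂ x) = g₂ (β x) := LinearMap.congr_fun hβγ x
  ext z
  constructor
  · rintro ⟨y, rfl⟩
    simp [hβγ', hg.apply_apply_eq_zero]
  · intro hz
    obtain ⟨x, rfl⟩ := hf₂ z
    obtain ⟨y, hy⟩ := (hg (β x)).mp (by rwa [← hβγ'])
    exact ⟨y, by simp [hy]⟩

/-- The inverse of the connecting isomorphism in the snake lemma for a ladder with exact rows
`X₁ → X₂ → X₃ → 0` and `0 → Y₁ → Y₂ → Y₃` whose middle vertical map is an isomorphism. -/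
noncomputable def snakeEquiv (hf : Exact f₁ f₂) (hf₂ : Surjective f₂)
    (hg₁ : Injective g₁) (hg : Exact g₁ g₂)
    (hαβ : β.toLinearMap ∘ₗ f₁ = g₁ ∘ₗ α) (hβγ : γ ∘ₗ f₂ = g₂ ∘ₗ β.toLinearMap) :
    (Y₁ ⧸ LinearMap.range α) ≃ₗ[R] LinearMap.ker γ :=
  Submodule.quotEquivOfEq _ _ (ker_comp_symm_comp_eq_range hf hg₁ hαβ).symm ≪≫ₗ
    (f₂ ∘ₗ β.symm.toLinearMap ∘ₗ g₁).quotKerEquivRange ≪≫ₗ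
    LinearEquiv.ofEq _ _ (range_comp_symm_comp_eq_ker hf₂ hg hβγ)

end Snake

section Hom

variable {R P Q L M N : Type*} [CommRing R]
  [AddCommGroup P] [AddCommGroup Q] [AddCommGroup L] [AddCommGroup M] [AddCommGroup N]
  [Module R P] [Module R Q] [Module R L] [Module R M] [Module R N]

variable (P) in
theorem exact_compRight_of_exact_of_injective
    {i : L →ₗ[R] M} {q : M →ₗ[R] N} (hi : Injective i) (hiq : Exact i q) :
    Exact (i.compRight R (M := P)) (q.compRight R (M := P)) := by
  intro v
  constructor
  · intro hv
    have hmem (x : P) : v x ∈ LinearMap.range i := (hiq _).mp (LinearMap.congr_fun hv x)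
    refine ⟨(LinearEquiv.ofInjective i hi).symm.toLinearMap ∘ₗ v.codRestrict _ hmem, ?_⟩
    ext x
    exact congrArg Subtype.val
      ((LinearEquiv.ofInjective i hi).apply_symm_apply (v.codRestrict _ hmem x))
  · rintro ⟨u, rfl⟩
    ext x
    exact hiq.apply_apply_eq_zero (u x)

variable (N) in
/-- A linear map out of the cokernel of `φ` is a linear map out of the target of `φ` that vanishes
after composition with `φ`. -/
noncomputable def homCokernelEquivKer (φ : P →ₗ[R] Q) :
    ((Q ⧸ LinearMap.range φ) →ₗ[R] N) ≃ₗ[R] LinearMap.ker (φ.lcomp R N) :=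
  LinearEquiv.ofInjective _
      (LinearMap.lcomp_injective_of_surjective _ (Submodule.mkQ_surjective _)) ≪≫ₗ
    LinearEquiv.ofEq _ _ (LinearMap.exact_lcomp_of_exact_of_surjective N
      (LinearMap.exact_map_mkQ_range φ) (Submodule.mkQ_surjective _)).linearMap_ker_eq.symm

/-- For `0 → L → M → N → 0` exact and `φ : P → Q` with `Q` projective, if composition with `φ`
identifies `Hom(Q, M)` with `Hom(P, M)` then the maps from the cokernel of `φ` to `N` form the
cokernel of composition with `φ` on maps to `L`. -/
noncomputable def homCokernelEquivCokernelHom [Module.Projective R Q] (φ : P →ₗ[R] Q)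
    {i : L →ₗ[R] M} {q : M →ₗ[R] N} (hi : Injective i) (hiq : Exact i q) (hq : Surjective q)
    (hφ : Bijective (φ.lcomp R M)) :
    ((Q ⧸ LinearMap.range φ) →ₗ[R] N) ≃ₗ[R] (P →ₗ[R] L) ⧸ LinearMap.range (φ.lcomp R L) :=
  homCokernelEquivKer N φ ≪≫ₗ
    (snakeEquiv (β := LinearEquiv.ofBijective _ hφ)
      (exact_compRight_of_exact_of_injective Q hi hiq)
      (fun f ↦ Module.projective_lifting_property q f hq)
      (fun _ _ h ↦ LinearMap.cancel_left hi |>.mp h)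
      (exact_compRight_of_exact_of_injective P hi hiq) rfl rfl).symm

end Hom

section BaseChange

variable {A K P F G : Type*} [CommRing A] [CommRing K] [Algebra A K]
  [AddCommGroup P] [AddCommGroup F] [AddCommGroup G] [Module A P] [Module A F] [Module A G]

theorem lcomp_bijective_of_baseChange_bijective {Q M : Type*} [AddCommGroup Q] [Module A Q]
    [AddCommGroup M] [Module A M] [Module K M] [IsScalarTower A K M] {φ : P →ₗ[A] Q}
    (hφ : Bijective (φ.baseChange K)) : Bijective (φ.lcomp A M) := by
  let e := LinearEquiv.ofBijective _ hφ
  have hcomp : φ.lcomp A M = (LinearMap.liftBaseChangeEquiv K).symm ∘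
      (e.symm.congrLeft M K) ∘ (LinearMap.liftBaseChangeEquiv K) := by
    ext f x
    simp [LinearEquiv.congrLeft, e]
  rw [hcomp]
  exact (LinearEquiv.bijective _).comp ((LinearEquiv.bijective _).comp (LinearEquiv.bijective _))

theorem baseChange_bijective_of_subsingleton_cokernel [Module.Finite A P] (φ : P →ₗ[A] P)
    [Subsingleton (K ⊗[A] (P ⧸ LinearMap.range φ))] : Bijective (φ.baseChange K) := by
  refine OrzechProperty.bijective_of_surjective_endomorphism _ fun x ↦ ?_
  exact (lTensor_exact K (LinearMap.exact_map_mkQ_range φ) (Submodule.mkQ_surjective _) x).mp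
    (Subsingleton.elim _ _)

theorem nontrivial_tensorProduct_of_comap_mem_support [Module.Finite A F] (q : PrimeSpectrum K)
    (hq : q.comap (algebraMap A K) ∈ Module.support A F) : Nontrivial (K ⊗[A] F) := by
  let p := q.comap (algebraMap A K)
  let κp := p.asIdeal.ResidueField
  let κq := q.asIdeal.ResidueField
  let κmap : κp →+* κq := Ideal.ResidueField.map p.asIdeal q.asIdeal (algebraMap A K) rfl
  let _ : Algebra κp κq := κmap.toAlgebra
  have : IsScalarTower A κp κq := .of_algebraMap_eq fun a ↦ by
    rw [IsScalarTower.algebraMap_apply A K κq]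
    exact (Ideal.ResidueField.map_algebraMap ..).symm
  have : Nontrivial (κp ⊗[A] F) :=
    (Module.mem_support_iff_nontrivial_residueField_tensorProduct p).mp hq
  have : Nontrivial (κq ⊗[A] F) :=
    (AlgebraTensorModule.cancelBaseChange A κp κq κq F).symm.nontrivial
  have : Nontrivial (κq ⊗[K] (K ⊗[A] F)) :=
    (AlgebraTensorModule.cancelBaseChange A K κq κq F).nontrivial
  exact not_subsingleton_iff_nontrivial.mp fun _ ↦
    not_subsingleton (κq ⊗[K] (K ⊗[A] F)) inferInstance

theorem map_annihilator_eq_top_of_subsingleton_tensorProduct [Module.Finite A F]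
    [Subsingleton (K ⊗[A] F)] : (Module.annihilator A F).map (algebraMap A K) = ⊤ := by
  by_contra hne
  obtain ⟨m, hm, hle⟩ := Ideal.exists_le_maximal _ hne
  let q : PrimeSpectrum K := ⟨m, hm.isPrime⟩
  have hq : q.comap (algebraMap A K) ∈ Module.support A F :=
    Module.mem_support_iff_of_finite.mpr (Ideal.map_le_iff_le_comap.mp hle)
  exact not_subsingleton_iff_nontrivial.mpr
    (nontrivial_tensorProduct_of_comap_mem_support q hq) inferInstance

theorem subsingleton_tensorProduct_of_annihilator_le [Module.Finite A F]
    [Subsingleton (K ⊗[A] F)] (hFG : Module.annihilator A F ≤ Module.annihilator A G) :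
    Subsingleton (K ⊗[A] G) := by
  have hle : (Module.annihilator A F).map (algebraMap A K) ≤
      Module.annihilator K (K ⊗[A] G) := by
    refine Ideal.map_le_iff_le_comap.mpr fun a ha ↦ Module.mem_annihilator.mpr fun t ↦ ?_
    induction t with
    | zero => exact smul_zero _
    | add s t hs ht => rw [smul_add, hs, ht, add_zero]
    | tmul k g =>
      rw [algebraMap_smul, ← tmul_smul, Module.mem_annihilator.mp (hFG ha) g, tmul_zero]
  rw [map_annihilator_eq_top_of_subsingleton_tensorProduct, top_le_iff] at hle
  exact Module.annihilator_eq_top_iff.mp hle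

theorem annihilator_le_annihilator_hom :
    Module.annihilator A F ≤ Module.annihilator A (F →ₗ[A] G) :=
  fun a ha ↦ Module.mem_annihilator.mpr fun f ↦ LinearMap.ext fun x ↦ by
    rw [LinearMap.smul_apply, ← map_smul, Module.mem_annihilator.mp ha, map_zero,
      LinearMap.zero_apply]

theorem subsingleton_tensorProduct_hom [Module.Finite A F] [Subsingleton (K ⊗[A] F)] :
    Subsingleton (K ⊗[A] (F →ₗ[A] G)) :=
  subsingleton_tensorProduct_of_annihilator_le (F := F) annihilator_le_annihilator_hom

end BaseChange

theorem range_linearEquiv_conj {R M N : Type*} [CommRing R] [AddCommGroup M] [AddCommGroup N]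
    [Module R M] [Module R N] (e : M ≃ₗ[R] N) (f : Module.End R M) :
    LinearMap.range (e.conj f) = (LinearMap.range f).map e.toLinearMap := by
  rw [LinearEquiv.conj_apply, LinearMap.range_comp_of_range_eq_top _ e.symm.range,
    LinearMap.range_comp]

theorem statement18_general {A K P : Type*} [CommRing A] [CommRing K] [Algebra A K]
    [FaithfulSMul A K] [AddCommGroup P] [Module A P] [Module.Finite A P] [Module.Projective A P]
    (φ : P →ₗ[A] P) (htors : Subsingleton ((P ⧸ LinearMap.range φ) ⊗[A] K)) :
    Subsingleton
      (((P ⧸ LinearMap.range φ) →ₗ[A] K ⧸ LinearMap.range (Algebra.linearMap A K)) ⊗[A] K) ∧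
    Nonempty (((P ⧸ LinearMap.range φ) →ₗ[A] K ⧸ LinearMap.range (Algebra.linearMap A K)) ≃ₗ[A]
      Module.Dual A P ⧸ LinearMap.range φ.dualMap) := by
  have : Subsingleton (K ⊗[A] (P ⧸ LinearMap.range φ)) :=
    (TensorProduct.comm A K _).subsingleton
  constructor
  · have := subsingleton_tensorProduct_hom (A := A) (K := K) (F := P ⧸ LinearMap.range φ)
      (G := K ⧸ LinearMap.range (Algebra.linearMap A K))
    exact (TensorProduct.comm A _ K).subsingleton
  · exact ⟨homCokernelEquivCokernelHom φ (FaithfulSMul.algebraMap_injective A K)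
      (LinearMap.exact_map_mkQ_range _) (Submodule.mkQ_surjective _)
      (lcomp_bijective_of_baseChange_bijective
        (baseChange_bijective_of_subsingleton_cokernel (K := K) φ))⟩

/-- Let `A` be a commutative ring with total quotient ring `K`, and
let `F = coker (φ : Aⁿ → Aⁿ)` (`n ≥ 1`) be a torsion module with few relations, i.e.
`F ⊗[A] K = 0`.  Then the Pontryagin dual `F† = Hom_A(F, K/A)` is also a torsion module
with few relations: `F† ⊗[A] K = 0` and `F†` is (isomorphic to) the cokernel of an
`A`-linear map `Aⁿ → Aⁿ`. -/
theorem statement18 {A : Type*} [CommRing A] (n : ℕ) (hn : 1 ≤ n)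
    (φ : (Fin n → A) →ₗ[A] (Fin n → A))
    (htors : Subsingleton (TensorProduct A ((Fin n → A) ⧸ LinearMap.range φ)
        (TotalQuotientRing A))) :
    Subsingleton (TensorProduct A
        ((((Fin n → A) ⧸ LinearMap.range φ)) →ₗ[A] KModA A) (TotalQuotientRing A)) ∧
    ∃ ψ : (Fin n → A) →ₗ[A] (Fin n → A),
      Nonempty (((((Fin n → A) ⧸ LinearMap.range φ)) →ₗ[A] KModA A) ≃ₗ[A]
        ((Fin n → A) ⧸ LinearMap.range ψ)) := by
  obtain ⟨htors_dual, ⟨equiv_dual⟩⟩ := statement18_general φ htors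
  let e := (Pi.basisFun A (Fin n)).toDualEquiv.symm
  exact ⟨htors_dual, e.conj φ.dualMap,
    ⟨equiv_dual ≪≫ₗ Submodule.Quotient.equiv _ _ e (range_linearEquiv_conj e _).symm⟩⟩
end
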